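/- arXiv:1507.01519 — 2 statements merged into one kernel-verified Lean document; each statement's English description precedes it below -/
import Mathlib

section
/- Let ℓ = (ℓ_1, …, ℓ_n) be a generic n-tuple of positive real numbers, and let z_1, …, z_n be unit vectors in ℝ³ with ℓ_1 z_1 + ⋯ + ℓ_n z_n = 0. If g is a linear isometry of ℝ³ (equivalently, a 3×3 orthogonal matrix) with determinant 1 satisfying g z_i = z_i for all i, then g is the identity. In other words, the rotation group SO(3) acts freely on the spatial polygon configuration space when ℓ is generic. -/
/-!
If all `z i` were collinear, they would be `±v` for one unit vector `v`, and `∑ ℓ i • z i = 0`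
would split the lengths into two parts of equal sum, contradicting genericity. So the polygon spans
at least a plane, which `g` fixes pointwise. In dimension at most three the orthogonal complement
of that plane is at most a line, so `g` is the identity or a reflection, and `det g = 1` excludes
the reflection.
-/

open Module Submodule

/-- Generic tuples of edge lengths: no subfamily has the same total length as its complement.
The entries may have any sign. -/
def IsGenericTuple {ι : Type*} [Fintype ι] [DecidableEq ι] (ℓ : ι → ℝ) : Prop :=
  ∀ S : Finset ι, ∑ i ∈ S, ℓ i ≠ ∑ i ∈ Sᶜ, ℓ i

theorem eq_or_eq_neg_of_norm_eq_of_not_linearIndependent {V : Type*} [NormedAddCommGroup V]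
    [NormedSpace ℝ V] {x y : V} (hnorm : ‖x‖ = ‖y‖) (hxy : ¬LinearIndependent ℝ ![x, y]) :
    x = y ∨ x = -y := by
  have hray := sameRay_or_sameRay_neg_iff_not_linearIndependent.mpr hxy
  rwa [sameRay_iff_of_norm_eq hnorm, sameRay_iff_of_norm_eq (hnorm.trans (norm_neg y).symm)]
    at hray

namespace IsGenericTuple

variable {ι : Type*} [Fintype ι] [DecidableEq ι] {ℓ : ι → ℝ}

theorem nonempty (hℓ : IsGenericTuple ℓ) : Nonempty ι := by
  by_contra hempty
  rw [not_nonempty_iff] at hempty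
  exact hℓ ∅ (by simp)

theorem sum_smul_ne_zero_of_eq_or_eq_neg {V : Type*} [AddCommGroup V] [Module ℝ V]
    (hℓ : IsGenericTuple ℓ) {z : ι → V} {v : V} (hv : v ≠ 0) (hz : ∀ i, z i = v ∨ z i = -v) :
    ∑ i, ℓ i • z i ≠ 0 := by
  classical
  set S : Finset ι := {i | z i = v}
  have hS : ∑ i ∈ S, ℓ i • z i = (∑ i ∈ S, ℓ i) • v := by
    rw [Finset.sum_smul]
    exact Finset.sum_congr rfl fun i hi => by rw [(Finset.mem_filter.mp hi).2]
  have hSc : ∑ i ∈ Sᶜ, ℓ i • z i = -((∑ i ∈ Sᶜ, ℓ i) • v) := by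
    rw [Finset.sum_smul, ← Finset.sum_neg_distrib]
    refine Finset.sum_congr rfl fun i hi => ?_
    have hne : z i ≠ v := by simpa [S] using hi
    rw [(hz i).resolve_left hne, smul_neg]
  rw [← Finset.sum_add_sum_compl S, hS, hSc, ← sub_eq_add_neg, ← sub_smul]
  exact smul_ne_zero (sub_ne_zero.mpr (hℓ S)) hv

theorem exists_linearIndependent_pair {V : Type*} [NormedAddCommGroup V] [NormedSpace ℝ V]
    (hℓ : IsGenericTuple ℓ) {z : ι → V} (hunit : ∀ i, ‖z i‖ = 1) (hsum : ∑ i, ℓ i • z i = 0) :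
    ∃ i j, LinearIndependent ℝ ![z i, z j] := by
  by_contra! hdep
  obtain ⟨k⟩ := hℓ.nonempty
  have hk : z k ≠ 0 := by simp [← norm_ne_zero_iff, hunit]
  refine hℓ.sum_smul_ne_zero_of_eq_or_eq_neg hk (fun i => ?_) hsum
  exact eq_or_eq_neg_of_norm_eq_of_not_linearIndependent ((hunit i).trans (hunit k).symm) (hdep i k)

end IsGenericTuple

section Isometry

variable {E : Type*} [NormedAddCommGroup E] [InnerProductSpace ℝ E] [FiniteDimensional ℝ E]

theorem finrank_orthogonal_span_range_add_card {ι : Type*} [Fintype ι] {b : ι → E}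
    (hb : LinearIndependent ℝ b) :
    finrank ℝ (span ℝ (Set.range b))ᗮ + Fintype.card ι = finrank ℝ E := by
  rw [← finrank_span_eq_card hb, add_comm, finrank_add_finrank_orthogonal]

theorem eq_refl_or_eq_reflection_of_finrank_orthogonal_le_one {W : Submodule ℝ E}
    (hW : finrank ℝ Wᗮ ≤ 1) {g : E ≃ₗᵢ[ℝ] E} (hg : ∀ x ∈ W, g x = x) :
    g = LinearIsometryEquiv.refl ℝ E ∨ ∃ v : E, v ≠ 0 ∧ g = (ℝ ∙ v)ᗮ.reflection := by
  have hker : W ≤ (ContinuousLinearMap.id ℝ E - g).ker := fun x hx => by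
    simp [hg x hx]
  obtain ⟨l, hlen, hprod⟩ := g.reflections_generate_dim_aux
    ((finrank_mono (orthogonal_le hker)).trans hW)
  match l, hlen with
  | [], _ => exact Or.inl hprod
  | [v], _ =>
    simp only [List.map_cons, List.map_nil, List.prod_cons, List.prod_nil, mul_one] at hprod
    rcases eq_or_ne v 0 with rfl | hv
    · left
      ext x
      simp [hprod, reflection_mem_subspace_eq_self]
    · exact Or.inr ⟨v, hv, hprod⟩

theorem det_reflection_orthogonal_span_singleton {v : E} (hv : v ≠ 0) :
    LinearMap.det ((ℝ ∙ v)ᗮ.reflection.toLinearEquiv : E →ₗ[ℝ] E) = -1 := by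
  calc
    LinearMap.det ((ℝ ∙ v)ᗮ.reflection.toLinearEquiv : E →ₗ[ℝ] E)
    _ = (-1) ^ finrank ℝ (ℝ ∙ v)ᗮᗮ := (ℝ ∙ v)ᗮ.det_reflection
    _ = -1 := by rw [orthogonal_orthogonal, finrank_span_singleton hv, pow_one]

theorem eq_refl_of_det_eq_one_of_finrank_orthogonal_le_one {W : Submodule ℝ E}
    (hW : finrank ℝ Wᗮ ≤ 1) {g : E ≃ₗᵢ[ℝ] E}
    (hdet : LinearMap.det (g.toLinearEquiv : E →ₗ[ℝ] E) = 1) (hg : ∀ x ∈ W, g x = x) :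
    g = LinearIsometryEquiv.refl ℝ E := by
  rcases eq_refl_or_eq_reflection_of_finrank_orthogonal_le_one hW hg with hrefl | ⟨v, hv, rfl⟩
  · exact hrefl
  · rw [det_reflection_orthogonal_span_singleton hv] at hdet
    norm_num at hdet

theorem rotation_fixing_generic_polygon_is_id_general {ι : Type*} [Fintype ι] [DecidableEq ι]
    (hE : finrank ℝ E ≤ 3) {ℓ : ι → ℝ} (hℓ : IsGenericTuple ℓ) {z : ι → E}
    (hunit : ∀ i, ‖z i‖ = 1) (hsum : ∑ i, ℓ i • z i = 0) {g : E ≃ₗᵢ[ℝ] E}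
    (hdet : LinearMap.det (g.toLinearEquiv : E →ₗ[ℝ] E) = 1) (hfix : ∀ i, g (z i) = z i) :
    g = LinearIsometryEquiv.refl ℝ E := by
  obtain ⟨i, j, hind⟩ := hℓ.exists_linearIndependent_pair hunit hsum
  have hcodim : finrank ℝ (span ℝ (Set.range ![z i, z j]))ᗮ ≤ 1 := by
    have hrank := finrank_orthogonal_span_range_add_card hind
    rw [Fintype.card_fin] at hrank
    omega
  have hplane : Set.EqOn (g : E →ₗ[ℝ] E) LinearMap.id (span ℝ (Set.range ![z i, z j])) :=
    LinearMap.eqOn_span' (by simp [Set.EqOn, hfix])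
  exact eq_refl_of_det_eq_one_of_finrank_orthogonal_le_one hcodim hdet hplane

end Isometry

/-- If `ℓ` is generic, `z 1, …, z n` are unit vectors in `ℝ³` with
`∑ ℓ i • z i = 0`, and `g` is a linear isometry of `ℝ³` of determinant `1`
fixing every `z i`, then `g` is the identity (SO(3) acts freely). -/
theorem rotation_fixing_generic_polygon_is_id (n : ℕ) (ℓ : Fin n → ℝ)
    (hpos : ∀ i, 0 < ℓ i)
    (hgen : ¬ ∃ S : Finset (Fin n), ∑ i ∈ S, ℓ i = ∑ i ∈ Sᶜ, ℓ i)
    (z : Fin n → EuclideanSpace ℝ (Fin 3))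
    (hunit : ∀ i, ‖z i‖ = 1) (hsum : ∑ i, ℓ i • z i = 0)
    (g : EuclideanSpace ℝ (Fin 3) ≃ₗᵢ[ℝ] EuclideanSpace ℝ (Fin 3))
    (hdet : LinearMap.det (g.toLinearEquiv :
      EuclideanSpace ℝ (Fin 3) →ₗ[ℝ] EuclideanSpace ℝ (Fin 3)) = 1)
    (hfix : ∀ i, g (z i) = z i) :
    g = LinearIsometryEquiv.refl ℝ (EuclideanSpace ℝ (Fin 3)) := by
  have hℓ : IsGenericTuple ℓ := not_exists.mp hgen
  exact rotation_fixing_generic_polygon_is_id_general finrank_euclideanSpace_fin.le hℓ hunit hsum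
    hdet hfix
end

section
/- Let A be a commutative ring, let m ≥ r ≥ 0 be integers, and let R, V_1, …, V_r ∈ A satisfy: (i) V_j² = R·V_j for all j; (ii) R^e · ∏_{j ∈ T} V_j = 0 for every subset T ⊆ {1, …, r} and every integer e ≥ 0 with e + |T| > m; and (iii) R^{m − |T|} · ∏_{j ∈ T} V_j = 0 for every proper subset T ⊊ {1, …, r}. Then in the tensor product A ⊗_ℤ A, (R ⊗ 1 − 1 ⊗ R)^{2m − 2r} · ∏_{j=1}^{r} (V_j ⊗ 1 − 1 ⊗ V_j)² = (−1)^m · binom(2m − 2r, m − r) · 2^r · (R^{m − r} V_1 ⋯ V_r) ⊗ (R^{m − r} V_1 ⋯ V_r). -/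
open scoped TensorProduct

/-!
The relation `V j ^ 2 = R * V j` turns `(V j ⊗ 1 - 1 ⊗ V j) ^ 2` into
`-2 (V j ⊗ V j) + (R V j ⊗ 1 + 1 ⊗ R V j)`. Expanding everything yields multiples of tensors
`R ^ e V_T ⊗ R ^ f V_U`, where `V_T` is the product of the `V j` with `j ∈ T`, of total degree `2m`.
If such a tensor is nonzero, neither factor has degree above `m`, so both have degree `m` and
minimality forces `T` and `U` to be everything. As `T ∩ U` consists of the indices at which
`-2 (V j ⊗ V j)` was chosen, that summand is chosen for every `j`, and only the middle term of the
binomial expansion of `(R ⊗ 1 - 1 ⊗ R) ^ (2m - 2r)` remains.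
-/

open Finset

section Monomials

variable {ι M : Type*} [Fintype ι] [CommMonoidWithZero M] {m : ℕ}

/-- Among the monomials `R ^ e * ∏ j ∈ T, V j` of degree `e + #T` at least `m`, only the one of
degree exactly `m` that involves every `V j` may be nonzero. This combines vanishing above the top
degree `m` with the minimality of the number of distinct factors `V j` of a nonzero monomial in
degree `m`. -/
def HasOnlyFullTopMonomial (m : ℕ) (R : M) (V : ι → M) : Prop :=
  ∀ (T : Finset ι) (e : ℕ), m ≤ e + #T → R ^ e * ∏ j ∈ T, V j ≠ 0 → T = univ ∧ e + #T = m

theorem hasOnlyFullTopMonomial_of_eq_zero {n : ℕ} {R : M} {V : ι → M}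
    (h_full : R ^ (n + 1) * ∏ j, V j = 0)
    (h_proper : ∀ T : Finset ι, T ≠ univ →
      R ^ (n + Fintype.card ι - #T) * ∏ j ∈ T, V j = 0) :
    HasOnlyFullTopMonomial (n + Fintype.card ι) R V := by
  intro T e he hne
  have eq_zero_of_le {d : ℕ} (hd : d ≤ e) (h : R ^ d * ∏ j ∈ T, V j = 0) :
      R ^ e * ∏ j ∈ T, V j = 0 := by
    rw [← Nat.sub_add_cancel hd, pow_add, mul_assoc, h, mul_zero]
  obtain rfl : T = univ := by
    by_contra hT
    exact hne (eq_zero_of_le (by lia) (h_proper T hT))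
  refine ⟨rfl, ?_⟩
  by_contra hdeg
  rw [card_univ] at he hdeg
  exact hne (eq_zero_of_le (by lia) h_full)

namespace HasOnlyFullTopMonomial

theorem map {N F : Type*} [CommMonoidWithZero N] [FunLike F M N] [MonoidWithZeroHomClass F M N]
    {R : M} {V : ι → M} (h : HasOnlyFullTopMonomial m R V) (f : F) :
    HasOnlyFullTopMonomial m (f R) (fun j ↦ f (V j)) := by
  intro T e he hne
  refine h T e he fun h_zero ↦ hne ?_
  rw [← map_pow, ← map_prod, ← map_mul, h_zero, map_zero]

theorem eq_univ_and_degree_eq_of_mul_ne_zero {x y : M} {a b : ι → M}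
    (hx : HasOnlyFullTopMonomial m x a) (hy : HasOnlyFullTopMonomial m y b) {T U : Finset ι}
    {e f : ℕ} (hdeg : 2 * m ≤ (e + #T) + (f + #U))
    (hne : (x ^ e * ∏ j ∈ T, a j) * (y ^ f * ∏ j ∈ U, b j) ≠ 0) :
    T = univ ∧ U = univ ∧ e + #T = m ∧ f + #U = m := by
  have hT := fun h ↦ hx T e h (left_ne_zero_of_mul hne)
  have hU := fun h ↦ hy U f h (right_ne_zero_of_mul hne)
  have hT_le : e + #T ≤ m := (le_total m (e + #T)).elim (fun h ↦ (hT h).2.le) id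
  have hU_le : f + #U ≤ m := (le_total m (f + #U)).elim (fun h ↦ (hU h).2.le) id
  obtain ⟨hT_univ, hT_deg⟩ := hT (by lia)
  obtain ⟨hU_univ, hU_deg⟩ := hU (by lia)
  exact ⟨hT_univ, hU_univ, hT_deg, hU_deg⟩

end HasOnlyFullTopMonomial

end Monomials

theorem prod_mul_prod_mul_prod_of_disjoint {ι M : Type*} [CommMonoid M] [DecidableEq ι]
    (x y : M) (a b : ι → M) {S P Q : Finset ι} (hP : Disjoint S P) (hQ : Disjoint S Q) :
    (∏ j ∈ S, a j * b j) * ((∏ j ∈ P, x * a j) * ∏ j ∈ Q, y * b j) =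
      (x ^ #P * ∏ j ∈ S ∪ P, a j) * (y ^ #Q * ∏ j ∈ S ∪ Q, b j) := by
  simp only [prod_union hP, prod_union hQ, prod_mul_distrib, prod_const]
  ac_rfl

section Expansion

variable {C : Type*} [CommRing C]

theorem sub_pow_mul_pow_mul_pow (x y p q : C) (N e f : ℕ) :
    (x - y) ^ N * ((x ^ e * p) * (y ^ f * q)) =
      ∑ ij ∈ antidiagonal N, (-1) ^ ij.2 * (N.choose ij.1 : C) *
        ((x ^ (ij.1 + e) * p) * (y ^ (ij.2 + f) * q)) := by
  rw [sub_eq_add_neg, (Commute.all x (-y)).add_pow', sum_mul]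
  refine sum_congr rfl fun ij _ ↦ ?_
  rw [neg_pow y, nsmul_eq_mul]
  ring

theorem sub_sq_of_sq_eq_mul {x y a b : C} (ha : a ^ 2 = x * a) (hb : b ^ 2 = y * b) :
    (a - b) ^ 2 = -2 * (a * b) + (x * a + y * b) := by
  rw [← ha, ← hb]
  ring

end Expansion

namespace HasOnlyFullTopMonomial

variable {ι C : Type*} [Fintype ι] [CommRing C] {x y : C} {a b : ι → C}

theorem sub_pow_mul_eq_zero {m N e f : ℕ} {T U : Finset ι} (hx : HasOnlyFullTopMonomial m x a)
    (hy : HasOnlyFullTopMonomial m y b) (hdeg : 2 * m ≤ N + (e + #T) + (f + #U))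
    (hTU : ¬(T = univ ∧ U = univ)) :
    (x - y) ^ N * ((x ^ e * ∏ j ∈ T, a j) * (y ^ f * ∏ j ∈ U, b j)) = 0 := by
  rw [sub_pow_mul_pow_mul_pow]
  refine sum_eq_zero fun ij hij ↦ mul_eq_zero_of_right _ ?_
  rw [HasAntidiagonal.mem_antidiagonal] at hij
  by_contra hne
  obtain ⟨hT, hU, -⟩ := hx.eq_univ_and_degree_eq_of_mul_ne_zero hy (by lia) hne
  exact hTU ⟨hT, hU⟩

variable {n : ℕ}

theorem sub_pow_mul_prod_mul_prod_compl_eq_zero [DecidableEq ι]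
    (hx : HasOnlyFullTopMonomial (n + Fintype.card ι) x a)
    (hy : HasOnlyFullTopMonomial (n + Fintype.card ι) y b) {S : Finset ι} (hS : S ≠ univ) :
    (x - y) ^ (2 * n) * ((∏ j ∈ S, a j * b j) * ∏ j ∈ Sᶜ, (x * a j + y * b j)) = 0 := by
  rw [prod_add, mul_sum, mul_sum]
  refine sum_eq_zero fun P hP ↦ ?_
  rw [mem_powerset] at hP
  have hSP : Disjoint S P := disjoint_compl_right.mono_right hP
  have hSQ : Disjoint S (Sᶜ \ P) := disjoint_compl_right.mono_right sdiff_subset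
  have h_inter : (S ∪ P) ∩ (S ∪ Sᶜ \ P) = S := by
    rw [← union_inter_distrib_left, inter_sdiff_self, union_empty]
  have h_card : #S + (#P + #(Sᶜ \ P)) = Fintype.card ι := by
    rw [add_comm #P, card_sdiff_add_card_eq_card hP, card_add_card_compl]
  rw [prod_mul_prod_mul_prod_of_disjoint x y a b hSP hSQ]
  apply hx.sub_pow_mul_eq_zero hy
  · rw [card_union_of_disjoint hSP, card_union_of_disjoint hSQ]
    lia
  · rintro ⟨hP_univ, hQ_univ⟩
    rw [hP_univ, hQ_univ, univ_inter] at h_inter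
    exact hS h_inter.symm

theorem sub_pow_mul_prod_mul_prod
    (hx : HasOnlyFullTopMonomial (n + Fintype.card ι) x a)
    (hy : HasOnlyFullTopMonomial (n + Fintype.card ι) y b) :
    (x - y) ^ (2 * n) * ((∏ j, a j) * ∏ j, b j) =
      (-1) ^ n * (n.centralBinom : C) * ((x ^ n * ∏ j, a j) * (y ^ n * ∏ j, b j)) := by
  have h_expand := sub_pow_mul_pow_mul_pow x y (∏ j, a j) (∏ j, b j) (2 * n) 0 0
  simp only [pow_zero, one_mul, add_zero] at h_expand
  rw [h_expand, sum_eq_single_of_mem (n, n) (by simp [two_mul]), Nat.centralBinom]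
  rintro ⟨i, j⟩ hij hne
  rw [HasAntidiagonal.mem_antidiagonal] at hij
  refine mul_eq_zero_of_right _ ?_
  by_contra h_term
  obtain ⟨-, -, hi, hj⟩ :=
    hx.eq_univ_and_degree_eq_of_mul_ne_zero hy (by simp only [card_univ]; lia) h_term
  simp only [card_univ, Nat.add_right_cancel_iff] at hi hj
  exact hne (Prod.ext hi hj)

theorem sub_pow_mul_prod_sub_sq
    (hx : HasOnlyFullTopMonomial (n + Fintype.card ι) x a)
    (hy : HasOnlyFullTopMonomial (n + Fintype.card ι) y b)
    (ha : ∀ j, a j ^ 2 = x * a j) (hb : ∀ j, b j ^ 2 = y * b j) :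
    (x - y) ^ (2 * n) * ∏ j, (a j - b j) ^ 2 =
      (-1) ^ (n + Fintype.card ι) * (n.centralBinom : C) * 2 ^ Fintype.card ι *
        ((x ^ n * ∏ j, a j) * (y ^ n * ∏ j, b j)) := by
  classical
  calc (x - y) ^ (2 * n) * ∏ j, (a j - b j) ^ 2
    _ = ∑ S, (-2) ^ #S *
          ((x - y) ^ (2 * n) * ((∏ j ∈ S, a j * b j) * ∏ j ∈ Sᶜ, (x * a j + y * b j))) := by
      simp only [sub_sq_of_sq_eq_mul (ha _) (hb _)]
      rw [Fintype.prod_add, mul_sum]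
      refine sum_congr rfl fun S _ ↦ ?_
      rw [← pow_card_mul_prod]
      ring
    _ = (-2) ^ Fintype.card ι * ((x - y) ^ (2 * n) * ((∏ j, a j) * ∏ j, b j)) := by
      rw [Fintype.sum_eq_single univ fun S hS ↦ mul_eq_zero_of_right _
        (hx.sub_pow_mul_prod_mul_prod_compl_eq_zero hy hS)]
      simp only [card_univ, compl_univ, prod_empty, mul_one, prod_mul_distrib]
    _ = _ := by
      rw [hx.sub_pow_mul_prod_mul_prod hy, neg_pow (2 : C)]
      ring

end HasOnlyFullTopMonomial

theorem tensor_zero_divisor_product_formula_general (k : Type*) {A B ι : Type*} [CommSemiring k]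
    [CommRing A] [CommRing B] [Algebra k A] [Algebra k B] [Fintype ι] (n : ℕ)
    {R : A} {V : ι → A} {S : B} {W : ι → B}
    (hV : ∀ j, V j ^ 2 = R * V j) (hW : ∀ j, W j ^ 2 = S * W j)
    (hRV : HasOnlyFullTopMonomial (n + Fintype.card ι) R V)
    (hSW : HasOnlyFullTopMonomial (n + Fintype.card ι) S W) :
    (R ⊗ₜ[k] (1 : B) - (1 : A) ⊗ₜ[k] S) ^ (2 * n) *
        ∏ j, (V j ⊗ₜ[k] (1 : B) - (1 : A) ⊗ₜ[k] W j) ^ 2 =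
      (-1 : A ⊗[k] B) ^ (n + Fintype.card ι) * (n.centralBinom : A ⊗[k] B) *
        (2 : A ⊗[k] B) ^ Fintype.card ι *
        ((R ^ n * ∏ j, V j) ⊗ₜ[k] (S ^ n * ∏ j, W j)) := by
  let left : A →ₐ[k] A ⊗[k] B := Algebra.TensorProduct.includeLeft
  let right : B →ₐ[k] A ⊗[k] B := Algebra.TensorProduct.includeRight
  have h_tmul (u : A) (v : B) : u ⊗ₜ[k] v = left u * right v := by simp [left, right]
  have h_left (j : ι) : left (V j) ^ 2 = left R * left (V j) := by
    rw [← map_pow, hV, map_mul]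
  have h_right (j : ι) : right (W j) ^ 2 = right S * right (W j) := by
    rw [← map_pow, hW, map_mul]
  simpa only [h_tmul, map_one, mul_one, one_mul, map_mul, map_pow, map_prod] using
    (hRV.map left).sub_pow_mul_prod_sub_sq (hSW.map right) h_left h_right

/-- the central tensor-product computation in the proof of the main
theorem: under the relations (i) `V j ^ 2 = R * V j`, (ii) vanishing of products
above degree `m`, and (iii) vanishing of `R ^ (m − |T|) * ∏_{j ∈ T} V j` for proper
subsets `T`, one has
`(R ⊗ 1 − 1 ⊗ R) ^ (2m − 2r) * ∏ j (V j ⊗ 1 − 1 ⊗ V j) ^ 2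
  = (−1)^m * C(2m − 2r, m − r) * 2^r * (R^(m−r) V₁ ⋯ V_r) ⊗ (R^(m−r) V₁ ⋯ V_r)`
in `A ⊗_ℤ A`. -/
theorem tensor_zero_divisor_product_formula (A : Type*) [CommRing A]
    (m r : ℕ) (hrm : r ≤ m) (R : A) (V : Fin r → A)
    (h1 : ∀ j, V j ^ 2 = R * V j)
    (h2 : ∀ (T : Finset (Fin r)) (e : ℕ), m < e + T.card →
      R ^ e * ∏ j ∈ T, V j = 0)
    (h3 : ∀ T : Finset (Fin r), T ≠ Finset.univ →
      R ^ (m - T.card) * ∏ j ∈ T, V j = 0) :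
    (R ⊗ₜ[ℤ] (1 : A) - (1 : A) ⊗ₜ[ℤ] R) ^ (2 * m - 2 * r) *
        ∏ j, (V j ⊗ₜ[ℤ] (1 : A) - (1 : A) ⊗ₜ[ℤ] V j) ^ 2 =
      (-1 : A ⊗[ℤ] A) ^ m * ((2 * m - 2 * r).choose (m - r) : A ⊗[ℤ] A) *
        (2 : A ⊗[ℤ] A) ^ r *
        ((R ^ (m - r) * ∏ j, V j) ⊗ₜ[ℤ] (R ^ (m - r) * ∏ j, V j)) := by
  obtain ⟨n, rfl⟩ := Nat.exists_eq_add_of_le' hrm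
  have hRV : HasOnlyFullTopMonomial (n + Fintype.card (Fin r)) R V :=
    hasOnlyFullTopMonomial_of_eq_zero (h2 univ (n + 1) (by simp)) (by simpa using h3)
  simpa [← Nat.mul_sub, Nat.centralBinom] using
    tensor_zero_divisor_product_formula_general ℤ n h1 h1 hRV hRV
end
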